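/- arXiv:2005.09021 — 4 statements merged into one kernel-verified Lean document; each statement's English description precedes it below -/
import Mathlib

section
/- Let β = max_{1≤i≤d} ‖a_i‖₂. If λ > β, then every local minimum of the objective F1_λ(x) = ‖Ax − y‖₂ + λ τ_k(x) is k-sparse. -/
open Finset Filter Topology

/-- Euclidean (ℓ₂) norm of a vector in ℝ^m. -/
noncomputable def l2norm {m : ℕ} (v : Fin m → ℝ) : ℝ := Real.sqrt (∑ i, v i ^ 2)

/-- The trimmed lasso penalty: the minimum, over index sets Λ of size d − k,
of the ℓ₁ norm of x restricted to Λ. -/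
noncomputable def tauTL {d : ℕ} (k : ℕ) (x : Fin d → ℝ) : ℝ :=
  sInf ((fun Λ : Finset (Fin d) => ∑ i ∈ Λ, |x i|) '' {Λ : Finset (Fin d) | Λ.card = d - k})

/-!
Let `x` be a local minimum and let `Λ` be an index set of size `d - k` attaining `τ_k(x)`. Changing
one coordinate `x i` with `i ∈ Λ` to `x i + c` changes the penalty by at most `|x i + c| - |x i|`,
since `Λ` still competes in the minimum, and increases the loss by at most `‖a_i‖₂ |c|`. If
`x i ≠ 0`, moving it towards `0` therefore gains `λ |c|` and costs only `‖a_i‖₂ |c| < λ |c|`. Hence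
`x` vanishes on `Λ`, and its support lies in the complement of `Λ`. Only the growth rate of the loss
at `x` along each coordinate enters, so any loss growing more slowly than `λ |c|` will do.
-/

section EuclideanNorm

variable {m : ℕ}

lemma l2norm_eq_norm_toLp (v : Fin m → ℝ) : l2norm v = ‖WithLp.toLp 2 v‖ := by
  simp [l2norm, EuclideanSpace.norm_eq]

lemma l2norm_nonneg (v : Fin m → ℝ) : 0 ≤ l2norm v := Real.sqrt_nonneg _

lemma l2norm_add_smul_le (u v : Fin m → ℝ) (c : ℝ) :
    l2norm (u + c • v) ≤ l2norm u + l2norm v * |c| := by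
  simp only [l2norm_eq_norm_toLp, WithLp.toLp_add, WithLp.toLp_smul]
  simpa [norm_smul, mul_comm] using norm_add_le (WithLp.toLp 2 u) (c • WithLp.toLp 2 v)

lemma l2norm_mulVec_add_single_sub_le {d : ℕ} (A : Matrix (Fin m) (Fin d) ℝ) (y : Fin m → ℝ)
    (x : Fin d → ℝ) (i : Fin d) (c : ℝ) :
    l2norm (A.mulVec (x + Pi.single i c) - y) ≤
      l2norm (A.mulVec x - y) + l2norm (A.col i) * |c| := by
  have residual_eq : A.mulVec (x + Pi.single i c) - y = (A.mulVec x - y) + c • A.col i := by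
    rw [Matrix.mulVec_add, Matrix.mulVec_single, op_smul_eq_smul, add_sub_right_comm]
  exact residual_eq ▸ l2norm_add_smul_le _ _ c

end EuclideanNorm

section TrimmedLasso

variable {d k : ℕ} {x : Fin d → ℝ} {Λ : Finset (Fin d)}

lemma tauTL_le_sum_abs (x : Fin d → ℝ) (hΛ : #Λ = d - k) : tauTL k x ≤ ∑ i ∈ Λ, |x i| :=
  csInf_le (Set.toFinite _).bddBelow ⟨Λ, hΛ, rfl⟩

lemma exists_sum_abs_eq_tauTL (k : ℕ) (x : Fin d → ℝ) :
    ∃ Λ : Finset (Fin d), #Λ = d - k ∧ ∑ i ∈ Λ, |x i| = tauTL k x := by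
  have card_sub_le : d - k ≤ #(univ : Finset (Fin d)) := by simp
  obtain ⟨Λ, -, hΛ⟩ := exists_subset_card_eq card_sub_le
  exact Set.Nonempty.csInf_mem (Set.Nonempty.image _ ⟨Λ, hΛ⟩) ((Set.toFinite _).image _)

lemma tauTL_add_single_le (hΛ : #Λ = d - k) (hsum : ∑ j ∈ Λ, |x j| = tauTL k x) {i : Fin d}
    (hi : i ∈ Λ) (c : ℝ) :
    tauTL k (x + Pi.single i c) ≤ tauTL k x + (|x i + c| - |x i|) := by
  have sum_sub_sum : ∑ j ∈ Λ, |(x + Pi.single i c : Fin d → ℝ) j| - ∑ j ∈ Λ, |x j| =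
      |x i + c| - |x i| := by
    rw [← sum_sub_distrib, sum_eq_single_of_mem i hi fun j _ hji => by simp [hji]]
    simp
  rw [← hsum, ← sum_sub_sum, add_sub_cancel]
  exact tauTL_le_sum_abs _ hΛ

end TrimmedLasso

lemma ncard_support_add_card_le {ι M : Type*} [Fintype ι] [Zero M] {x : ι → M} {Λ : Finset ι}
    (hx : ∀ i ∈ Λ, x i = 0) : (Function.support x).ncard + #Λ ≤ Fintype.card ι := by
  classical
  have support_subset : Function.support x ⊆ ↑Λᶜ := fun i hi => by
    simpa using fun hiΛ => hi (hx i hiΛ)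
  have ncard_le := Set.ncard_le_ncard support_subset
  rw [Set.ncard_coe_finset] at ncard_le
  exact (Nat.add_le_add_right ncard_le _).trans_eq (card_compl_add_card Λ)

lemma eq_zero_of_eventually_mul_abs_le {a L lam : ℝ} (hL : L < lam)
    (h : ∀ᶠ c in 𝓝 0, lam * |a| ≤ L * |c| + lam * |a + c|) : a = 0 := by
  by_contra ha
  have tendsto_zero : Tendsto (fun t : ℝ => -(t * a)) (𝓝[>] 0) (𝓝 0) :=
    (Continuous.tendsto' (by fun_prop) 0 0 (by simp)).mono_left nhdsWithin_le_nhds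
  obtain ⟨t, hle, ht0, ht1⟩ :=
    ((tendsto_zero.eventually h).and (Ioo_mem_nhdsGT one_pos)).exists
  have abs_step : |-(t * a)| = t * |a| := by rw [abs_neg, abs_mul, abs_of_pos ht0]
  have abs_moved : |a + -(t * a)| = (1 - t) * |a| := by
    rw [show a + -(t * a) = (1 - t) * a by ring, abs_mul, abs_of_pos (sub_pos.2 ht1)]
  rw [abs_step, abs_moved] at hle
  have gain_gt_cost : L * (t * |a|) < lam * (t * |a|) :=
    mul_lt_mul_of_pos_right hL (mul_pos ht0 (abs_pos.2 ha))
  linarith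

section LocalMin

variable {d k : ℕ} {f : (Fin d → ℝ) → ℝ} {lam : ℝ} {x : Fin d → ℝ}

lemma apply_eq_zero_of_isLocalMin_add_mul_tauTL (hlam : 0 ≤ lam)
    (hmin : IsLocalMin (fun z => f z + lam * tauTL k z) x) {Λ : Finset (Fin d)}
    (hΛ : #Λ = d - k) (hsum : ∑ j ∈ Λ, |x j| = tauTL k x) {i : Fin d} (hi : i ∈ Λ) {L : ℝ}
    (hL : L < lam) (hf : ∀ᶠ c in 𝓝 0, f (x + Pi.single i c) ≤ f x + L * |c|) : x i = 0 := by
  have tendsto_x : Tendsto (fun c : ℝ => x + Pi.single i c) (𝓝 0) (𝓝 x) :=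
    Continuous.tendsto' (continuous_const.add (continuous_single i)) 0 x (by simp)
  refine eq_zero_of_eventually_mul_abs_le hL ?_
  filter_upwards [tendsto_x.eventually hmin, hf] with c hminc hfc
  have penalty_le := mul_le_mul_of_nonneg_left (tauTL_add_single_le hΛ hsum hi c) hlam
  linarith

theorem stmt1_general (hlam : 0 ≤ lam)
    (hf : ∀ i, ∃ L < lam, ∀ᶠ c in 𝓝 0, f (x + Pi.single i c) ≤ f x + L * |c|)
    (hmin : IsLocalMin (fun z => f z + lam * tauTL k z) x) :
    Set.ncard {i | x i ≠ 0} ≤ k := by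
  obtain ⟨Λ, hΛ, hsum⟩ := exists_sum_abs_eq_tauTL k x
  have eq_zero_on : ∀ i ∈ Λ, x i = 0 := fun i hi =>
    let ⟨_, hL, hfi⟩ := hf i
    apply_eq_zero_of_isLocalMin_add_mul_tauTL hlam hmin hΛ hsum hi hL hfi
  have card_le : Set.ncard {i | x i ≠ 0} + #Λ ≤ Fintype.card (Fin d) :=
    ncard_support_add_card_le eq_zero_on
  rw [hΛ, Fintype.card_fin] at card_le
  omega

end LocalMin

/-- If λ > β = maxᵢ ‖aᵢ‖₂, then every local minimum of
F1_λ(x) = ‖Ax − y‖₂ + λ τ_k(x) is k-sparse. -/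
theorem stmt1 {n d : ℕ} (k : ℕ) (hk : 0 < k) (hkd : k < d)
    (A : Matrix (Fin n) (Fin d) ℝ) (y : Fin n → ℝ) (lam : ℝ)
    (hlam : (⨆ i : Fin d, l2norm (fun j => A j i)) < lam)
    (xstar : Fin d → ℝ)
    (hmin : IsLocalMin
      (fun x : Fin d → ℝ => l2norm (A.mulVec x - y) + lam * tauTL k x) xstar) :
    Set.ncard {i : Fin d | xstar i ≠ 0} ≤ k := by
  have iSup_nonneg := Real.iSup_nonneg fun i : Fin d => l2norm_nonneg (A.col i)
  exact stmt1_general (iSup_nonneg.trans hlam.le) (fun i =>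
    ⟨_, (le_ciSup (Set.finite_range _).bddAbove i).trans_lt hlam,
      .of_forall (l2norm_mulVec_add_single_sub_le A y xstar i)⟩) hmin
end

section
/- For every γ ∈ [0,∞), the function τ̄_{k,γ}(x, x̃) = τ_{k,γ}(x̃) + ⟨w_{k,γ}(x̃), |x| − |x̃|⟩ is a majorizer of τ_{k,γ}: for all x, x̃ ∈ ℝ^d one has τ̄_{k,γ}(x, x̃) ≥ τ_{k,γ}(x), and τ̄_{k,γ}(x, x) = τ_{k,γ}(x). Here |x| denotes the vector of absolute values (|x_1|,…,|x_d|) and ⟨·,·⟩ the Euclidean inner product. -/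
/-!
With `m = d - k` and `f_Λ = ∑ i ∈ Λ, |x i|`, the penalty `τ_{k,γ}(x)` is the soft minimum of the
numbers `f_Λ` over the `m`-subsets `Λ`, also for `γ = 0`, where the soft minimum is the plain
average. By Jensen's inequality for `exp` under Gibbs weights, log-sum-exp lies above its tangent
planes, so the soft minimum lies below its own. Double counting identifies the pairing with
`w_{k,γ}(x̃)` as the Gibbs average of the `m`-subset sums, i.e. as the slope of that tangent plane.
-/

open Finset Filter Topology

/-- The generalized soft-min penalty τ_{k,γ}; at γ = 0 it equals
((d−k)/d)‖x‖₁. -/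
noncomputable def tauGSM {d : ℕ} (k : ℕ) (γ : ℝ) (x : Fin d → ℝ) : ℝ :=
  if γ = 0 then (((d : ℝ) - (k : ℝ)) / (d : ℝ)) * ∑ i, |x i|
  else -(1 / γ) * Real.log ((1 / (d.choose (d - k) : ℝ)) *
    ∑ Λ ∈ Finset.univ.powersetCard (d - k), Real.exp (-γ * ∑ i ∈ Λ, |x i|))

/-- The GSM weight vector w_{k,γ}(x). -/
noncomputable def wGSM {d : ℕ} (k : ℕ) (γ : ℝ) (x : Fin d → ℝ) (i : Fin d) : ℝ :=
  (∑ Λ ∈ (Finset.univ.powersetCard (d - k)).filter (fun Λ => i ∈ Λ),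
      Real.exp (-γ * ∑ j ∈ Λ, |x j|)) /
  (∑ Λ ∈ Finset.univ.powersetCard (d - k), Real.exp (-γ * ∑ j ∈ Λ, |x j|))

open scoped BigOperators

section SoftMin

variable {ι : Type*} {s : Finset ι}

theorem log_sum_exp_add_centerMass_sub_le (hs : s.Nonempty) (a b : ι → ℝ) :
    Real.log (∑ i ∈ s, Real.exp (b i)) +
        s.centerMass (fun i => Real.exp (b i)) (fun i => a i - b i) ≤
      Real.log (∑ i ∈ s, Real.exp (a i)) := by
  have sum_exp_pos (c : ι → ℝ) : 0 < ∑ i ∈ s, Real.exp (c i) :=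
    sum_pos (fun i _ => Real.exp_pos _) hs
  have reweight : s.centerMass (fun i => Real.exp (b i)) (Real.exp ∘ fun i => a i - b i) =
      (∑ i ∈ s, Real.exp (a i)) / ∑ i ∈ s, Real.exp (b i) := by
    simp only [centerMass, smul_eq_mul, Function.comp_apply, ← Real.exp_add, add_sub_cancel,
      inv_mul_eq_div]
  have jensen := convexOn_exp.map_centerMass_le (p := fun i => a i - b i)
    (fun i _ => (Real.exp_pos (b i)).le) (sum_exp_pos b) (fun i _ => Set.mem_univ _)
  rw [reweight, ← Real.le_log_iff_exp_le (div_pos (sum_exp_pos a) (sum_exp_pos b)),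
    Real.log_div (sum_exp_pos a).ne' (sum_exp_pos b).ne'] at jensen
  linarith

/-- The soft minimum of the values of `f` on `s` at inverse temperature `γ`, normalized to be `c`
on the constant family `c`. At `γ = 0` it is set to the average, its limit as `γ → 0`. -/
noncomputable def softMin (s : Finset ι) (γ : ℝ) (f : ι → ℝ) : ℝ :=
  if γ = 0 then 𝔼 i ∈ s, f i else -(1 / γ) * Real.log (𝔼 i ∈ s, Real.exp (-γ * f i))

theorem softMin_zero (f : ι → ℝ) : softMin s 0 f = 𝔼 i ∈ s, f i :=
  if_pos rfl

theorem softMin_of_ne_zero (hs : s.Nonempty) {γ : ℝ} (hγ : γ ≠ 0) (f : ι → ℝ) :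
    softMin s γ f = (Real.log #s - Real.log (∑ i ∈ s, Real.exp (-γ * f i))) / γ := by
  have hsum : ∑ i ∈ s, Real.exp (-γ * f i) ≠ 0 := (sum_pos (fun i _ => Real.exp_pos _) hs).ne'
  have hcard : (#s : ℝ) ≠ 0 := Nat.cast_ne_zero.2 hs.card_ne_zero
  rw [softMin, if_neg hγ, expect_eq_sum_div_card, Real.log_div hsum hcard]
  ring

theorem softMin_le_add_centerMass_sub (hs : s.Nonempty) {γ : ℝ} (hγ : 0 ≤ γ) (f g : ι → ℝ) :
    softMin s γ f ≤
      softMin s γ g + s.centerMass (fun i => Real.exp (-γ * g i)) (fun i => f i - g i) := by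
  rcases hγ.eq_or_lt with rfl | hγ
  · have slope : s.centerMass (fun i => Real.exp (-0 * g i)) (fun i => f i - g i) =
        𝔼 i ∈ s, (f i - g i) := by
      simp [centerMass, expect_eq_sum_div_card, div_eq_inv_mul]
    rw [softMin_zero, softMin_zero, slope, expect_sub_distrib, add_sub_cancel]
  · have tangent := log_sum_exp_add_centerMass_sub_le hs (fun i => -γ * f i) (fun i => -γ * g i)
    have hscale : s.centerMass (fun i => Real.exp (-γ * g i)) (fun i => -γ * f i - -γ * g i) =
        -γ * s.centerMass (fun i => Real.exp (-γ * g i)) (fun i => f i - g i) := by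
      simp only [← mul_sub]
      exact centerMass_smul ..
    rw [hscale] at tangent
    rw [softMin_of_ne_zero hs hγ.ne', softMin_of_ne_zero hs hγ.ne', div_add' _ _ _ hγ.ne']
    gcongr
    linarith

end SoftMin

section SubsetSums

variable {α M : Type*} [AddCommMonoid M]

theorem sum_powersetCard_succ_sum (s : Finset α) (m : ℕ) (f : α → M) :
    ∑ t ∈ s.powersetCard (m + 1), ∑ i ∈ t, f i = (#s - 1).choose m • ∑ i ∈ s, f i := by
  classical
  have hcount {i : α} (hi : i ∈ s) :
      #{t ∈ s.powersetCard (m + 1) | i ∈ t} = (#s - 1).choose m := by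
    simpa using card_filter_powersetCard_subset {i} s (m + 1) (singleton_subset_iff.2 hi) (by simp)
  calc ∑ t ∈ s.powersetCard (m + 1), ∑ i ∈ t, f i
      = ∑ i ∈ s, ∑ t ∈ s.powersetCard (m + 1) with i ∈ t, f i := by
        refine sum_comm' fun t i => ?_
        simp only [mem_filter, mem_powersetCard]
        exact ⟨fun ⟨ht, hi⟩ => ⟨⟨ht, hi⟩, ht.1 hi⟩, fun ⟨ht, _⟩ => ht⟩
    _ = ∑ i ∈ s, (#s - 1).choose m • f i :=
        sum_congr rfl fun i hi => by rw [sum_const, hcount hi]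
    _ = (#s - 1).choose m • ∑ i ∈ s, f i := smul_sum.symm

theorem expect_powersetCard_sum [Module ℚ≥0 M] {s : Finset α} {m : ℕ} (hm : m ≤ #s) (f : α → M) :
    𝔼 t ∈ s.powersetCard m, ∑ i ∈ t, f i = m • 𝔼 i ∈ s, f i := by
  cases m with
  | zero => simp
  | succ m =>
    have habsorb : #s * (#s - 1).choose m = (#s).choose (m + 1) * (m + 1) := by
      simpa [Nat.sub_add_cancel (Nat.one_le_of_lt hm)] using
        Nat.add_one_mul_choose_eq (#s - 1) m
    have hcard : (#s : ℚ≥0) ≠ 0 := Nat.cast_ne_zero.2 (Nat.ne_zero_of_lt hm)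
    have hchoose : ((#s).choose (m + 1) : ℚ≥0) ≠ 0 :=
      Nat.cast_ne_zero.2 (Nat.choose_ne_zero hm)
    rw [expect, expect, sum_powersetCard_succ_sum, card_powersetCard,
      ← Nat.cast_smul_eq_nsmul ℚ≥0, ← Nat.cast_smul_eq_nsmul ℚ≥0, smul_smul, smul_smul]
    congr 1
    field_simp
    rw [mul_comm]
    exact_mod_cast habsorb

end SubsetSums

theorem tauGSM_eq_softMin {d k : ℕ} (hkd : k ≤ d) (γ : ℝ) (x : Fin d → ℝ) :
    tauGSM k γ x = softMin (univ.powersetCard (d - k)) γ (fun Λ => ∑ i ∈ Λ, |x i|) := by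
  rcases eq_or_ne γ 0 with rfl | hγ
  · rw [softMin_zero, expect_powersetCard_sum (by simp), tauGSM, if_pos rfl,
      expect_eq_sum_div_card, card_fin, nsmul_eq_mul, Nat.cast_sub hkd]
    ring
  · rw [softMin, tauGSM, if_neg hγ, if_neg hγ, expect_eq_sum_div_card, card_powersetCard,
      card_fin, one_div_mul_eq_div]

theorem sum_wGSM_mul_eq_centerMass {d : ℕ} (k : ℕ) (γ : ℝ) (x y : Fin d → ℝ) :
    ∑ i, wGSM k γ x i * y i =
      (univ.powersetCard (d - k)).centerMass (fun Λ => Real.exp (-γ * ∑ j ∈ Λ, |x j|))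
        (fun Λ => ∑ i ∈ Λ, y i) := by
  simp only [wGSM, centerMass, smul_eq_mul, inv_mul_eq_div, div_mul_eq_mul_div, ← sum_div,
    sum_mul, mul_sum]
  congr 1
  exact sum_comm' (by simp [and_comm])

/-- For every γ ∈ [0,∞), τ̄_{k,γ}(x,x̃) = τ_{k,γ}(x̃) + ⟨w_{k,γ}(x̃), |x|−|x̃|⟩
majorizes τ_{k,γ}: it is ≥ τ_{k,γ}(x) for all x, x̃, with equality at x = x̃. -/
theorem stmt10 {d : ℕ} (k : ℕ) (hk : 0 < k) (hkd : k < d)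
    (γ : ℝ) (hγ : 0 ≤ γ) (x xt : Fin d → ℝ) :
    tauGSM k γ x ≤ tauGSM k γ xt + ∑ i, wGSM k γ xt i * (|x i| - |xt i|) ∧
    tauGSM k γ xt + (∑ i, wGSM k γ xt i * (|xt i| - |xt i|)) = tauGSM k γ xt := by
  have hne : (univ.powersetCard (d - k) : Finset (Finset (Fin d))).Nonempty :=
    powersetCard_nonempty.2 (by simp)
  refine ⟨?_, by simp⟩
  have tangent := softMin_le_add_centerMass_sub hne hγ
    (fun Λ => ∑ i ∈ Λ, |x i|) (fun Λ => ∑ i ∈ Λ, |xt i|)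
  rw [tauGSM_eq_softMin hkd.le, tauGSM_eq_softMin hkd.le, sum_wGSM_mul_eq_centerMass]
  simpa only [sum_sub_distrib] using tangent
end

section
/- Every stationary point of the trimmed-lasso objective F2_λ(x) = (1/2)‖Ax − y‖₂² + λ τ_k(x) is a local minimum of F2_λ. That is, if x̃ ∈ ℝ^d is such that for every direction v ∈ ℝ^d the directional derivative ∇_v F2_λ(x̃) = lim_{t↓0} (F2_λ(x̃ + t v) − F2_λ(x̃))/t exists and is nonnegative, then x̃ is a local minimum of F2_λ. -/
open Finset Filter Topology

/-- The power-2 trimmed-lasso objective F2_λ(x) = (1/2)‖Ax − y‖₂² + λ τ_k(x). -/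
noncomputable def F2obj {n d : ℕ} (A : Matrix (Fin n) (Fin d) ℝ) (y : Fin n → ℝ)
    (k : ℕ) (lam : ℝ) (x : Fin d → ℝ) : ℝ :=
  (1 / 2) * (l2norm (A.mulVec x - y)) ^ 2 + lam * tauTL k x

/-!
The penalty `τ_k` is the minimum of finitely many partial `ℓ₁` norms, so the objective is the
minimum of finitely many convex functions. A piece whose value at `x` exceeds that of the objective
stays above that value near `x`, by continuity. A piece that is active at `x` lies above the
objective and agrees with it at `x`, so its difference quotients at `x` dominate those of the
objective; by convexity `x` is a global minimum of that piece.
-/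

section StationaryPoint

variable {E : Type*} [AddCommGroup E] [Module ℝ E] {f g : E → ℝ} {x : E}

/-- Stationary points of a possibly nonsmooth function: every one-sided directional derivative of
`f` at `x` exists and is nonnegative. -/
def IsStationaryPoint (f : E → ℝ) (x : E) : Prop :=
  ∀ v : E, ∃ L : ℝ, 0 ≤ L ∧ Tendsto (fun t : ℝ => (f (x + t • v) - f x) / t) (𝓝[>] 0) (𝓝 L)

theorem diffQuotient_le_sub_of_convexOn {C : Set E} (hg : ConvexOn ℝ C g) {z : E} (hx : x ∈ C)
    (hz : z ∈ C) {t : ℝ} (ht : t ∈ Set.Ioc 0 1) :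
    (g (x + t • (z - x)) - g x) / t ≤ g z - g x := by
  have hchord : g (x + t • (z - x)) ≤ (1 - t) * g x + t * g z := by
    have hpoint : x + t • (z - x) = (1 - t) • x + t • z := by module
    rw [hpoint]
    exact hg.2 hx hz (sub_nonneg.2 ht.2) ht.1.le (sub_add_cancel 1 t)
  rw [div_le_iff₀ ht.1]
  linarith

theorem IsStationaryPoint.isMinOn_of_le_convexOn {C : Set E} (hf : IsStationaryPoint f x)
    (hg : ConvexOn ℝ C g) (hxC : x ∈ C) (hfg : ∀ z ∈ C, f z ≤ g z) (hfgx : f x = g x) :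
    IsMinOn g C x := by
  intro z hzC
  obtain ⟨L, hL, hlim⟩ := hf (z - x)
  have hL_le : L ≤ g z - g x := by
    refine le_of_tendsto hlim ?_
    filter_upwards [Ioc_mem_nhdsGT zero_lt_one] with t ht
    have hfg_t : f (x + t • (z - x)) ≤ g (x + t • (z - x)) :=
      hfg _ (hg.1.add_smul_sub_mem hxC hzC (Set.Ioc_subset_Icc_self ht))
    calc (f (x + t • (z - x)) - f x) / t
        ≤ (g (x + t • (z - x)) - g x) / t := by
          rw [hfgx]
          exact div_le_div_of_nonneg_right (sub_le_sub_right hfg_t _) ht.1.le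
      _ ≤ g z - g x := diffQuotient_le_sub_of_convexOn hg hxC hzC ht
  exact sub_nonneg.1 (hL.trans hL_le)

theorem IsStationaryPoint.isLocalMin_of_isLeast_convexOn [TopologicalSpace E] {ι : Type*}
    {s : Set ι} {φ : ι → E → ℝ} (hf : IsStationaryPoint f x) (hs : s.Finite)
    (hmin : ∀ z, IsLeast ((fun i => φ i z) '' s) (f z))
    (hconv : ∀ i ∈ s, ConvexOn ℝ Set.univ (φ i))
    (hlsc : ∀ i ∈ s, LowerSemicontinuousAt (φ i) x) : IsLocalMin f x := by
  have hle : ∀ i ∈ s, ∀ z, f z ≤ φ i z := fun i hi z => (hmin z).2 (Set.mem_image_of_mem _ hi)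
  have hpieces : ∀ᶠ z in 𝓝 x, ∀ i ∈ s, f x ≤ φ i z := by
    refine (eventually_all_finite hs).2 fun i hi => ?_
    rcases (hle i hi x).eq_or_lt with hactive | hinactive
    · exact Eventually.of_forall fun z => hactive.trans_le
        (hf.isMinOn_of_le_convexOn (hconv i hi) (Set.mem_univ x) (fun w _ => hle i hi w) hactive
          (Set.mem_univ z))
    · exact (hlsc i hi _ hinactive).mono fun z hz => hz.le
  filter_upwards [hpieces] with z hz
  obtain ⟨i, hi, hfz⟩ := (hmin z).1
  exact (hz i hi).trans_eq hfz

end StationaryPoint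

section Convexity

theorem convexOn_finset_sum {𝕜 E β ι : Type*} [Semiring 𝕜] [PartialOrder 𝕜] [AddCommMonoid E]
    [AddCommMonoid β] [PartialOrder β] [IsOrderedAddMonoid β] [SMul 𝕜 E] [Module 𝕜 β]
    {C : Set E} (hC : Convex 𝕜 C) {s : Finset ι} {f : ι → E → β}
    (hf : ∀ i ∈ s, ConvexOn 𝕜 C (f i)) : ConvexOn 𝕜 C fun x => ∑ i ∈ s, f i x := by
  rw [← Finset.sum_fn]
  exact Finset.sum_induction f (ConvexOn 𝕜 C) (fun _ _ => ConvexOn.add) (convexOn_const 0 hC) hf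

theorem convexOn_sum_abs {ι : Type*} (s : Finset ι) :
    ConvexOn ℝ Set.univ fun x : ι → ℝ => ∑ i ∈ s, |x i| :=
  convexOn_finset_sum convex_univ fun i _ =>
    (convexOn_univ_norm (E := ℝ)).comp_linearMap (LinearMap.proj (φ := fun _ : ι => ℝ) i)

theorem l2norm_sq {m : ℕ} (v : Fin m → ℝ) : l2norm v ^ 2 = ∑ i, v i ^ 2 :=
  Real.sq_sqrt (Finset.sum_nonneg fun i _ => sq_nonneg (v i))

theorem convexOn_l2norm_sq (m : ℕ) : ConvexOn ℝ Set.univ fun v : Fin m → ℝ => l2norm v ^ 2 := by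
  simp only [l2norm_sq]
  exact convexOn_finset_sum convex_univ fun i _ =>
    (even_two.convexOn_pow (𝕜 := ℝ)).comp_linearMap (LinearMap.proj (φ := fun _ : Fin m => ℝ) i)

theorem convexOn_half_l2norm_mulVec_sub_sq {n d : ℕ} (A : Matrix (Fin n) (Fin d) ℝ)
    (y : Fin n → ℝ) :
    ConvexOn ℝ Set.univ fun x => (1 / 2 : ℝ) * l2norm (A.mulVec x - y) ^ 2 :=
  ((convexOn_l2norm_sq n).comp_affineMap
    (A.mulVecLin.toAffineMap - AffineMap.const ℝ (Fin d → ℝ) y)).smul one_half_pos.le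

end Convexity

section TrimmedLasso

variable {d : ℕ}

theorem isLeast_tauTL (k : ℕ) (x : Fin d → ℝ) :
    IsLeast ((fun Λ : Finset (Fin d) => ∑ i ∈ Λ, |x i|) '' {Λ | Λ.card = d - k})
      (tauTL k x) := by
  obtain ⟨Λ, -, hΛ⟩ : ∃ Λ ⊆ (univ : Finset (Fin d)), Λ.card = d - k :=
    exists_subset_card_eq (by simp)
  exact ((Set.toFinite _).image _).isCompact.isLeast_sInf ⟨_, Set.mem_image_of_mem _ hΛ⟩

theorem isLeast_add_mul_tauTL (k : ℕ) {lam : ℝ} (hlam : 0 ≤ lam) (c : ℝ) (x : Fin d → ℝ) :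
    IsLeast ((fun Λ : Finset (Fin d) => c + lam * ∑ i ∈ Λ, |x i|) '' {Λ | Λ.card = d - k})
      (c + lam * tauTL k x) := by
  have hmono : Monotone fun r => c + lam * r := fun _ _ hr =>
    add_le_add_right (mul_le_mul_of_nonneg_left hr hlam) c
  simpa only [Set.image_image] using hmono.map_isLeast (isLeast_tauTL k x)

theorem stmt11_general {k : ℕ} {loss : (Fin d → ℝ) → ℝ} (hloss : ConvexOn ℝ Set.univ loss)
    {lam : ℝ} (hlam : 0 ≤ lam) {x : Fin d → ℝ}
    (hx : IsStationaryPoint (fun z => loss z + lam * tauTL k z) x) :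
    IsLocalMin (fun z => loss z + lam * tauTL k z) x := by
  have hconv (Λ : Finset (Fin d)) :
      ConvexOn ℝ Set.univ fun z => loss z + lam * ∑ i ∈ Λ, |z i| :=
    hloss.add ((convexOn_sum_abs Λ).smul hlam)
  exact hx.isLocalMin_of_isLeast_convexOn (Set.toFinite {Λ : Finset (Fin d) | Λ.card = d - k})
    (fun z => isLeast_add_mul_tauTL k hlam (loss z) z) (fun Λ _ => hconv Λ)
    fun Λ _ => (hconv Λ).locallyLipschitz.continuous.continuousAt.lowerSemicontinuousAt

end TrimmedLasso

/-- Every stationary point of F2_λ (a point at which every one-sided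
directional derivative exists and is nonnegative) is a local minimum of F2_λ. -/
theorem stmt11 {n d : ℕ} (k : ℕ) (hk : 0 < k) (hkd : k < d)
    (A : Matrix (Fin n) (Fin d) ℝ) (y : Fin n → ℝ) (lam : ℝ) (hlam : 0 < lam)
    (xt : Fin d → ℝ)
    (hstat : ∀ v : Fin d → ℝ, ∃ L : ℝ, 0 ≤ L ∧
      Tendsto (fun t : ℝ => (F2obj A y k lam (xt + t • v) - F2obj A y k lam xt) / t)
        (nhdsWithin 0 (Set.Ioi 0)) (nhds L)) :
    IsLocalMin (F2obj A y k lam) xt :=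
  stmt11_general (convexOn_half_l2norm_mulVec_sub_sq A y) hlam.le hstat
end

section
/- Let z ∈ ℝ^d with entries sorted as z_(1) ≥ … ≥ z_(d), and let 0 < k < d. For the limit γ → +∞, set Λ_a = {i : z_i > z_(k)} and Λ_b = {i : z_i = z_(k)}; for the limit γ → −∞, set Λ_a = {i : z_i < z_(d−k+1)} and Λ_b = {i : z_i = z_(d−k+1)}. Then in each case, for every i ∈ {1,…,d}, lim_{γ→±∞} θ_{k,γ}^i(z) equals 1 if i ∈ Λ_a, equals (k − |Λ_a|)/|Λ_b| if i ∈ Λ_b, and equals 0 otherwise. -/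
open Finset Filter Topology

/-- The q-th largest entry (1-indexed) of a vector z ∈ ℝ^d. -/
noncomputable def kthLargest {d : ℕ} (z : Fin d → ℝ) (q : ℕ) : ℝ :=
  ((Finset.univ.val.map z).sort (· ≤ ·)).getD (d - q) 0

/-- The generalized soft-max weights θ_{k,γ}(z). -/
noncomputable def thetaGSM {d : ℕ} (k : ℕ) (γ : ℝ) (z : Fin d → ℝ) (i : Fin d) : ℝ :=
  (∑ Λ ∈ (Finset.univ.powersetCard k).filter (fun Λ => i ∈ Λ),
      Real.exp (γ * ∑ j ∈ Λ, z j)) /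
  (∑ Λ ∈ Finset.univ.powersetCard k, Real.exp (γ * ∑ j ∈ Λ, z j))

/-!
Call `exp (γ ∑_{j ∈ Λ} z j)` the mass of a `k`-subset `Λ`. For `γ ≥ 0`, exchanging an element `i` of
`Λ` for some `j ∉ Λ` with `z i + δ ≤ z j` multiplies its mass by at least `exp (γ δ)`, so a family
of `k`-subsets that all admit such an exchange, with `δ > 0` fixed, carries a vanishing fraction of
the total mass as `γ → ∞`. With `t = z_(k)`, this applies to the sets that contain a given entry
below `t`, and to the sets that omit a given entry above `t`, whence the limits `0` and `1`. Since
the soft-max weights sum to `k` and agree on equal entries, the amount `k - |Λ_a|` left over by the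
entries above `t` is shared equally among the entries equal to `t`. The limit at `-∞` is the limit
at `+∞` for `-z`.
-/

section OrderStatistics

theorem card_filter_lt_apply_sort_le {n : ℕ} {α : Type*} [LinearOrder α] (f : Fin n → α)
    (m : Fin n) : #{j | f j < f (Tuple.sort f m)} ≤ m := by
  have hsub : ({j | f j < f (Tuple.sort f m)} : Finset (Fin n)) ⊆
      (Iio m).map (Tuple.sort f).toEmbedding := by
    intro j hj
    rw [mem_map_equiv, mem_Iio]
    exact (Tuple.monotone_sort f).reflect_lt (by simpa using hj)
  simpa only [card_map, Fin.card_Iio] using card_le_card hsub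

theorem card_filter_apply_sort_lt_le {n : ℕ} {α : Type*} [LinearOrder α] (f : Fin n → α)
    (m : Fin n) : #{j | f (Tuple.sort f m) < f j} ≤ n - 1 - m := by
  have hsub : ({j | f (Tuple.sort f m) < f j} : Finset (Fin n)) ⊆
      (Ioi m).map (Tuple.sort f).toEmbedding := by
    intro j hj
    rw [mem_map_equiv, mem_Ioi]
    exact (Tuple.monotone_sort f).reflect_lt (by simpa using hj)
  simpa only [card_map, Fin.card_Ioi] using card_le_card hsub

theorem sort_map_univ_eq_ofFn {n : ℕ} {α : Type*} [LinearOrder α] (f : Fin n → α) :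
    ((univ : Finset (Fin n)).val.map f).sort (· ≤ ·) = List.ofFn (f ∘ Tuple.sort f) := by
  have hperm : (((univ : Finset (Fin n)).val.map f).sort (· ≤ ·)).Perm (List.ofFn f) := by
    rw [← Multiset.coe_eq_coe, Multiset.sort_eq, Fin.univ_val_map]
  exact (hperm.trans ((Tuple.sort f).ofFn_comp_perm f).symm).eq_of_pairwise'
    (Multiset.pairwise_sort ..) (Tuple.monotone_sort f).sortedLE_ofFn.pairwise

variable {d q : ℕ} (z : Fin d → ℝ)

theorem kthLargest_eq_apply_sort (h : d - q < d) :
    kthLargest z q = z (Tuple.sort z ⟨d - q, h⟩) := by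
  rw [kthLargest, sort_map_univ_eq_ofFn]
  simp [h]

theorem card_filter_lt_kthLargest_le (hq : 0 < q) (hqd : q ≤ d) :
    #{j | z j < kthLargest z q} ≤ d - q := by
  have h : d - q < d := by omega
  rw [kthLargest_eq_apply_sort z h]
  exact card_filter_lt_apply_sort_le z ⟨d - q, h⟩

theorem card_filter_kthLargest_lt_lt (hq : 0 < q) (hqd : q ≤ d) :
    #{j | kthLargest z q < z j} < q := by
  have h : d - q < d := by omega
  have hcard : #{j | z (Tuple.sort z ⟨d - q, h⟩) < z j} ≤ d - 1 - (d - q) :=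
    card_filter_apply_sort_lt_le z ⟨d - q, h⟩
  rw [kthLargest_eq_apply_sort z h]
  omega

end OrderStatistics

/-- The normalizing sum of the generalized soft-max weights: the denominator of `thetaGSM`. -/
noncomputable def partitionGSM {d : ℕ} (k : ℕ) (γ : ℝ) (z : Fin d → ℝ) : ℝ :=
  ∑ Λ ∈ univ.powersetCard k, Real.exp (γ * ∑ j ∈ Λ, z j)

section SoftMax

variable {d k : ℕ} {γ : ℝ} {z : Fin d → ℝ}

theorem partitionGSM_pos (hkd : k ≤ d) : 0 < partitionGSM k γ z :=
  sum_pos (fun _ _ => Real.exp_pos _) (powersetCard_nonempty.2 (by simpa using hkd))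

theorem thetaGSM_neg_neg (k : ℕ) (γ : ℝ) (z : Fin d → ℝ) (i : Fin d) :
    thetaGSM k (-γ) (-z) i = thetaGSM k γ z i := by
  simp [thetaGSM]

theorem thetaGSM_comp_perm (k : ℕ) (γ : ℝ) (z : Fin d → ℝ) (σ : Equiv.Perm (Fin d)) (i : Fin d) :
    thetaGSM k γ (z ∘ σ) i = thetaGSM k γ z (σ i) := by
  unfold thetaGSM
  congr 1 <;> exact sum_equiv σ.finsetCongr (by simp) (by simp)

theorem thetaGSM_eq_of_apply_eq {i j : Fin d} (h : z i = z j) :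
    thetaGSM k γ z i = thetaGSM k γ z j := by
  have hz : z ∘ Equiv.swap i j = z := by
    rw [Equiv.comp_swap_eq_update, h, Function.update_eq_self, ← h, Function.update_eq_self]
  simpa only [hz, Equiv.swap_apply_left] using thetaGSM_comp_perm k γ z (Equiv.swap i j) i

theorem sum_thetaGSM (hkd : k ≤ d) : ∑ i, thetaGSM k γ z i = k := by
  have hnum : ∑ i, ∑ Λ ∈ univ.powersetCard k with i ∈ Λ, Real.exp (γ * ∑ j ∈ Λ, z j) =
      k * partitionGSM k γ z := by
    simp only [sum_filter, partitionGSM, mul_sum]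
    rw [sum_comm]
    refine sum_congr rfl fun Λ hΛ => ?_
    simp [(mem_powersetCard.1 hΛ).2]
  unfold thetaGSM
  rw [← sum_div, hnum]
  exact mul_div_cancel_right₀ _ (partitionGSM_pos hkd).ne'

theorem one_sub_thetaGSM (hkd : k ≤ d) (i : Fin d) :
    1 - thetaGSM k γ z i =
      (∑ Λ ∈ univ.powersetCard k with i ∉ Λ, Real.exp (γ * ∑ j ∈ Λ, z j)) /
        partitionGSM k γ z := by
  have hZ : partitionGSM k γ z ≠ 0 := (partitionGSM_pos hkd).ne'
  have hmem : thetaGSM k γ z i * partitionGSM k γ z =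
      ∑ Λ ∈ univ.powersetCard k with i ∈ Λ, Real.exp (γ * ∑ j ∈ Λ, z j) := div_mul_cancel₀ _ hZ
  rw [eq_div_iff hZ, sub_mul, one_mul, hmem, sub_eq_iff_eq_add']
  exact (sum_filter_add_sum_filter_not _ _ _).symm

theorem card_filter_eq_mul_thetaGSM (hkd : k ≤ d) (i : Fin d) :
    #{j | z j = z i} * thetaGSM k γ z i =
      k - ∑ j with z i < z j, thetaGSM k γ z j - ∑ j with z j < z i, thetaGSM k γ z j := by
  have hties : ∑ j with z j = z i, thetaGSM k γ z j = #{j | z j = z i} * thetaGSM k γ z i := by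
    rw [← nsmul_eq_mul, ← sum_const]
    exact sum_congr rfl fun j hj => thetaGSM_eq_of_apply_eq (mem_filter.1 hj).2
  have htrichotomy : ∀ j, thetaGSM k γ z j = (if z i < z j then thetaGSM k γ z j else 0) +
      (if z j < z i then thetaGSM k γ z j else 0) +
      (if z j = z i then thetaGSM k γ z j else 0) := by
    intro j
    rcases lt_trichotomy (z j) (z i) with h | h | h
    · simp [h, h.not_gt, h.ne]
    · simp [h]
    · simp [h, h.not_gt, h.ne']
  have htotal : ∑ i, thetaGSM k γ z i = k := sum_thetaGSM hkd
  rw [sum_congr rfl fun j _ => htrichotomy j, sum_add_distrib, sum_add_distrib, ← sum_filter,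
    ← sum_filter, ← sum_filter, hties] at htotal
  linarith

theorem exp_sum_le_exp_mul_partitionGSM {Λ : Finset (Fin d)} (hΛ : #Λ = k) {i j : Fin d}
    (hi : i ∈ Λ) (hj : j ∉ Λ) :
    Real.exp (γ * ∑ l ∈ Λ, z l) ≤ Real.exp (γ * (z i - z j)) * partitionGSM k γ z := by
  have hj' : j ∉ Λ.erase i := fun h => hj (mem_of_mem_erase h)
  have hsum : ∑ l ∈ Λ, z l = (z i - z j) + ∑ l ∈ insert j (Λ.erase i), z l := by
    rw [sum_insert hj', ← add_sum_erase Λ z hi]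
    ring
  have hmem : insert j (Λ.erase i) ∈ univ.powersetCard k := by
    rw [mem_powersetCard_univ, card_insert_of_notMem hj', card_erase_add_one hi, hΛ]
  rw [hsum, mul_add, Real.exp_add]
  gcongr
  exact single_le_sum (f := fun Λ => Real.exp (γ * ∑ l ∈ Λ, z l))
    (fun _ _ => (Real.exp_pos _).le) hmem

theorem sum_exp_div_partitionGSM_le (hγ : 0 ≤ γ) (hkd : k ≤ d) {S : Finset (Finset (Fin d))} {δ : ℝ}
    (hS : ∀ Λ ∈ S, #Λ = k ∧ ∃ i ∈ Λ, ∃ j ∉ Λ, z i + δ ≤ z j) :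
    (∑ Λ ∈ S, Real.exp (γ * ∑ j ∈ Λ, z j)) / partitionGSM k γ z ≤ #S * Real.exp (-(γ * δ)) := by
  rw [div_le_iff₀ (partitionGSM_pos hkd), mul_assoc, ← nsmul_eq_mul]
  refine sum_le_card_nsmul _ _ _ fun Λ hΛ => ?_
  obtain ⟨hcard, i, hi, j, hj, hij⟩ := hS Λ hΛ
  have hexp : γ * (z i - z j) ≤ -(γ * δ) := by
    rw [← mul_neg]
    exact mul_le_mul_of_nonneg_left (by linarith) hγ
  calc Real.exp (γ * ∑ l ∈ Λ, z l)
      ≤ Real.exp (γ * (z i - z j)) * partitionGSM k γ z :=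
        exp_sum_le_exp_mul_partitionGSM hcard hi hj
    _ ≤ Real.exp (-(γ * δ)) * partitionGSM k γ z :=
        mul_le_mul_of_nonneg_right (Real.exp_le_exp.2 hexp) (partitionGSM_pos hkd).le

theorem tendsto_sum_exp_div_partitionGSM_atTop_zero (hkd : k ≤ d) {S : Finset (Finset (Fin d))}
    {δ : ℝ} (hδ : 0 < δ) (hS : ∀ Λ ∈ S, #Λ = k ∧ ∃ i ∈ Λ, ∃ j ∉ Λ, z i + δ ≤ z j) :
    Tendsto (fun γ : ℝ => (∑ Λ ∈ S, Real.exp (γ * ∑ j ∈ Λ, z j)) / partitionGSM k γ z)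
      atTop (𝓝 0) := by
  have hbound : Tendsto (fun γ : ℝ => #S * Real.exp (-(γ * δ))) atTop (𝓝 0) := by
    simpa only [mul_zero, Function.comp_def, id] using (Real.tendsto_exp_neg_atTop_nhds_zero.comp
      (tendsto_id.atTop_mul_const hδ)).const_mul (#S : ℝ)
  refine squeeze_zero' (Eventually.of_forall fun γ => ?_) ?_ hbound
  · exact div_nonneg (sum_nonneg fun _ _ => (Real.exp_pos _).le) (partitionGSM_pos hkd).le
  · filter_upwards [eventually_ge_atTop 0] with γ hγ
    exact sum_exp_div_partitionGSM_le hγ hkd hS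

end SoftMax

section Threshold

variable {d k : ℕ} {z : Fin d → ℝ} {t : ℝ} {i : Fin d}

theorem tendsto_thetaGSM_atTop_of_lt (hbelow : k + #{j | z j < t} ≤ d) (hi : z i < t) :
    Tendsto (fun γ : ℝ => thetaGSM k γ z i) atTop (𝓝 0) := by
  refine tendsto_sum_exp_div_partitionGSM_atTop_zero (by omega) (sub_pos.2 hi) fun Λ hΛ => ?_
  obtain ⟨hcard, hiΛ⟩ : #Λ = k ∧ i ∈ Λ := by simpa using hΛ
  obtain ⟨j, hj, hjΛ⟩ : ∃ j, t ≤ z j ∧ j ∉ Λ := by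
    by_contra! h
    have hsub : Λᶜ ⊂ ({j | z j < t} : Finset (Fin d)) := by
      refine (ssubset_iff_of_subset fun j hj => ?_).2 ⟨i, by simpa using hi, by simpa using hiΛ⟩
      exact mem_filter.2 ⟨mem_univ j, lt_of_not_ge fun htj => mem_compl.1 hj (h j htj)⟩
    have hlt := card_lt_card hsub
    rw [card_compl, Fintype.card_fin] at hlt
    omega
  exact ⟨hcard, i, hiΛ, j, hjΛ, by linarith⟩

theorem tendsto_thetaGSM_atTop_of_gt (hkd : k ≤ d) (habove : #{j | t < z j} ≤ k) (hi : t < z i) :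
    Tendsto (fun γ : ℝ => thetaGSM k γ z i) atTop (𝓝 1) := by
  suffices h : Tendsto (fun γ : ℝ => 1 - thetaGSM k γ z i) atTop (𝓝 0) by
    simpa only [sub_sub_cancel, sub_zero] using h.const_sub 1
  simp only [one_sub_thetaGSM hkd]
  refine tendsto_sum_exp_div_partitionGSM_atTop_zero hkd (sub_pos.2 hi) fun Λ hΛ => ?_
  obtain ⟨hcard, hiΛ⟩ : #Λ = k ∧ i ∉ Λ := by simpa using hΛ
  obtain ⟨j, hjΛ, hj⟩ : ∃ j ∈ Λ, z j ≤ t := by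
    by_contra! h
    have hsub : Λ ⊂ ({j | t < z j} : Finset (Fin d)) :=
      (ssubset_iff_of_subset fun j hj => by simpa using h j hj).2 ⟨i, by simpa using hi, hiΛ⟩
    have hlt := card_lt_card hsub
    omega
  exact ⟨hcard, j, hjΛ, i, hiΛ, by linarith⟩

theorem tendsto_thetaGSM_atTop_of_eq (habove : #{j | t < z j} ≤ k) (hbelow : k + #{j | z j < t} ≤ d)
    (hi : z i = t) :
    Tendsto (fun γ : ℝ => thetaGSM k γ z i) atTop
      (𝓝 (((k : ℝ) - #{j | t < z j}) / #{j | z j = t})) := by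
  subst hi
  have hkd : k ≤ d := by omega
  have hties : (#{j | z j = z i} : ℝ) ≠ 0 :=
    Nat.cast_ne_zero.2 (card_ne_zero_of_mem (a := i) (by simp))
  have hsum_above : Tendsto (fun γ : ℝ => ∑ j with z i < z j, thetaGSM k γ z j) atTop
      (𝓝 #{j | z i < z j}) := by
    simpa using tendsto_finsetSum _ fun j hj =>
      tendsto_thetaGSM_atTop_of_gt hkd habove (mem_filter.1 hj).2
  have hsum_below : Tendsto (fun γ : ℝ => ∑ j with z j < z i, thetaGSM k γ z j) atTop (𝓝 0) := by
    simpa using tendsto_finsetSum _ fun j hj =>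
      tendsto_thetaGSM_atTop_of_lt hbelow (mem_filter.1 hj).2
  have h := ((hsum_above.const_sub (k : ℝ)).sub hsum_below).div_const (#{j | z j = z i} : ℝ)
  simpa only [← card_filter_eq_mul_thetaGSM hkd, mul_div_cancel_left₀ _ hties, sub_zero] using h

theorem tendsto_thetaGSM_atTop (habove : #{j | t < z j} ≤ k) (hbelow : k + #{j | z j < t} ≤ d)
    (i : Fin d) :
    Tendsto (fun γ : ℝ => thetaGSM k γ z i) atTop (𝓝
      (if t < z i then 1
       else if z i = t then ((k : ℝ) - #{j | t < z j}) / #{j | z j = t}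
       else 0)) := by
  split_ifs with hgt heq
  · exact tendsto_thetaGSM_atTop_of_gt (by omega) habove hgt
  · exact tendsto_thetaGSM_atTop_of_eq habove hbelow heq
  · exact tendsto_thetaGSM_atTop_of_lt hbelow (lt_of_le_of_ne (not_lt.1 hgt) heq)

theorem tendsto_thetaGSM_atBot (hbelow : #{j | z j < t} ≤ k) (habove : k + #{j | t < z j} ≤ d)
    (i : Fin d) :
    Tendsto (fun γ : ℝ => thetaGSM k γ z i) atBot (𝓝
      (if z i < t then 1
       else if z i = t then ((k : ℝ) - #{j | z j < t}) / #{j | z j = t}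
       else 0)) := by
  have h := (tendsto_thetaGSM_atTop (z := -z) (t := -t) (by simpa using hbelow)
    (by simpa using habove) i).comp tendsto_neg_atBot_atTop
  simpa only [Function.comp_def, thetaGSM_neg_neg, Pi.neg_apply, neg_lt_neg_iff, neg_inj] using h

end Threshold

/-- Limits of the generalized soft-max weights θ_{k,γ}(z) as γ → +∞ and
γ → −∞: with Λ_a, Λ_b as in the statement, θ^i tends to 1 on Λ_a, to
(k − |Λ_a|)/|Λ_b| on Λ_b, and to 0 elsewhere. -/
theorem stmt12 {d : ℕ} (k : ℕ) (hk : 0 < k) (hkd : k < d) (z : Fin d → ℝ) :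
    (∀ i : Fin d,
      Tendsto (fun γ : ℝ => thetaGSM k γ z i) atTop (nhds
        (if kthLargest z k < z i then 1
         else if z i = kthLargest z k then
           ((k : ℝ) - (Set.ncard {j : Fin d | kthLargest z k < z j} : ℝ)) /
             (Set.ncard {j : Fin d | z j = kthLargest z k} : ℝ)
         else 0))) ∧
    (∀ i : Fin d,
      Tendsto (fun γ : ℝ => thetaGSM k γ z i) atBot (nhds
        (if z i < kthLargest z (d - k + 1) then 1
         else if z i = kthLargest z (d - k + 1) then
           ((k : ℝ) - (Set.ncard {j : Fin d | z j < kthLargest z (d - k + 1)} : ℝ)) /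
             (Set.ncard {j : Fin d | z j = kthLargest z (d - k + 1)} : ℝ)
         else 0))) := by
  simp only [Set.ncard_eq_toFinset_card', Set.toFinset_ofPred]
  constructor
  · have habove := card_filter_kthLargest_lt_lt z hk hkd.le
    have hbelow := card_filter_lt_kthLargest_le z hk hkd.le
    exact tendsto_thetaGSM_atTop (by omega) (by omega)
  · have hq : 0 < d - k + 1 := by omega
    have hqd : d - k + 1 ≤ d := by omega
    have habove := card_filter_kthLargest_lt_lt z hq hqd
    have hbelow := card_filter_lt_kthLargest_le z hq hqd
    exact tendsto_thetaGSM_atBot (by omega) (by omega)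
end
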